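/- The Poisson algebra A satisfies the Poisson Dixmier-Moeglin equivalence: for every Poisson prime ideal P of A, the following are equivalent: (i) P is locally closed, i.e. the intersection of all Poisson prime ideals of A strictly containing P strictly contains P; (ii) P is Poisson primitive; (iii) P is rational, i.e. the Poisson centre of the quotient field of A/P is ℂ — explicitly, whenever c, d ∈ A with d ∉ P satisfy d·{c,r} − c·{d,r} ∈ P for all r ∈ A, there exists α ∈ ℂ with c − αd ∈ P. -/

import Mathlib

/- STATEMENT 18: A satisfies the Poisson Dixmier–Moeglin equivalence: for every Poisson
prime ideal P of A, P is locally closed ↔ P is Poisson primitive ↔ P is rational. -/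

noncomputable section
open MvPolynomial

/-- The polynomial algebra `A = ℂ[x_1,…,x_{m+2}]`. -/
abbrev PA (m : ℕ) : Type := MvPolynomial (Fin (m + 2)) ℂ

/-- The rational function field `B = ℂ(x_1,…,x_{m+2})`. -/
abbrev FB (m : ℕ) : Type := FractionRing (PA m)

/-- The rows of the matrix computing the Poisson bracket on `A`: ∇f, ∇g and, for
each `i`, `t_i²∇(s_i/t_i) = t_i∇s_i − s_i∇t_i`. -/
def pbrRows {m : ℕ} (s t : Fin m → PA m) (f g : PA m) :
    Fin (m + 2) → Fin (m + 2) → PA m :=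
  Fin.cons (fun j => pderiv j f)
    (Fin.cons (fun j => pderiv j g)
      (fun k => fun j => t k * pderiv j (s k) - s k * pderiv j (t k)))

/-- The Poisson bracket `{f,g} = (t_1⋯t_m)²·Jac(f,g,s_1/t_1,…,s_m/t_m)` restricted to
the polynomial algebra `A`. -/
def pbr {m : ℕ} (s t : Fin m → PA m) (f g : PA m) : PA m :=
  Matrix.det (Matrix.of (pbrRows s t f g))


section helpers
open TensorProduct KaehlerDifferential

theorem kd_zero {σ : Type} [Fintype σ] {B L : Type} [CommRing B] [Algebra ℂ B]
    [Algebra (MvPolynomial σ ℂ) B] [IsScalarTower ℂ (MvPolynomial σ ℂ) B] [CommRing L] [Algebra B L]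
    (u : MvPolynomial σ ℂ)
    (h : ∀ j, algebraMap B L (algebraMap (MvPolynomial σ ℂ) B (pderiv j u)) = 0) :
    (1 : L) ⊗ₜ[B] KaehlerDifferential.D ℂ B (algebraMap (MvPolynomial σ ℂ) B u) = 0 := by
  classical
  let D1 : Derivation ℂ (MvPolynomial σ ℂ) (Ω[B⁄ℂ]) :=
    (KaehlerDifferential.D ℂ B).compAlgebraMap _
  have h2 : ∀ f, D1 f = ∑ j, pderiv j f • D1 (X j) := by
    intro f
    induction f using MvPolynomial.induction_on with
    | C a => simp
    | add p q hp hq => simp [hp, hq, add_smul, Finset.sum_add_distrib]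
    | mul_X p i hp =>
      simp only [Derivation.leibniz, hp, pderiv_X, add_smul, Finset.sum_add_distrib, smul_eq_mul,
        mul_smul, Finset.smul_sum]
      congr 1
      rw [Finset.sum_eq_single i] <;> simp +contextual [eq_comm]
  have h3 : KaehlerDifferential.D ℂ B (algebraMap (MvPolynomial σ ℂ) B u) =
      ∑ j, pderiv j u • D1 (X j) := h2 u
  rw [h3, tmul_sum]
  apply Finset.sum_eq_zero
  intro j _
  rw [← algebraMap_smul B (pderiv j u) (D1 (X j)), ← TensorProduct.smul_tmul, Algebra.smul_def, h j,
    zero_mul, TensorProduct.zero_tmul]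

theorem symb {σ : Type} [Fintype σ] (Q : Ideal (MvPolynomial σ ℂ)) [Q.IsPrime]
    (u : MvPolynomial σ ℂ) (hu : u ∈ Q) (h : ∀ j, pderiv j u ∈ Q) :
    ∃ w, w ∉ Q ∧ w * u ∈ Q ^ 2 := by
  classical
  let AQ := Localization.AtPrime Q
  let L := IsLocalRing.ResidueField AQ
  have fs1 : Algebra.FormallySmooth ℂ AQ :=
    haveI := Algebra.FormallySmooth.of_isLocalization (Rₘ := AQ) Q.primeCompl
    Algebra.FormallySmooth.comp ℂ (MvPolynomial σ ℂ) AQ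
  have ef1 : Algebra.EssFiniteType (MvPolynomial σ ℂ) AQ :=
    Algebra.EssFiniteType.of_isLocalization AQ Q.primeCompl
  have ef2 : Algebra.EssFiniteType ℂ AQ := Algebra.EssFiniteType.comp ℂ (MvPolynomial σ ℂ) AQ
  have ef3 : Algebra.EssFiniteType ℂ L := Algebra.EssFiniteType.comp ℂ AQ L
  have fs2 : Algebra.FormallySmooth ℂ L := inferInstance
  have hs : Function.Surjective (algebraMap AQ L) := IsLocalRing.residue_surjective
  have inj := (Algebra.FormallySmooth.kerCotangentToTensor_injective_iff (R := ℂ) (P := AQ) (A := L) hs).2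
    inferInstance
  have hker : RingHom.ker (algebraMap AQ L) = Ideal.map (algebraMap _ AQ) Q := by
    rw [Localization.AtPrime.map_eq_maximalIdeal]
    exact IsLocalRing.ker_residue
  have hu' : algebraMap _ AQ u ∈ RingHom.ker (algebraMap AQ L) := by
    rw [hker]; exact Ideal.mem_map_of_mem _ hu
  have hz : ∀ a ∈ Q, algebraMap AQ L (algebraMap _ AQ a) = 0 := fun a ha => by
    have : algebraMap _ AQ a ∈ RingHom.ker (algebraMap AQ L) := by
      rw [hker]; exact Ideal.mem_map_of_mem _ ha
    exact this
  have h0 : (RingHom.ker (algebraMap AQ L)).toCotangent ⟨_, hu'⟩ = 0 := by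
    apply inj
    rw [KaehlerDifferential.kerCotangentToTensor_toCotangent, map_zero]
    exact kd_zero u fun j => hz _ (h j)
  rw [Ideal.toCotangent_eq_zero] at h0
  simp only [hker] at h0
  rw [← Ideal.map_pow] at h0
  rw [IsLocalization.algebraMap_mem_map_algebraMap_iff Q.primeCompl] at h0
  obtain ⟨w, hw, h⟩ := h0
  exact ⟨w, hw, h⟩

theorem nak {R : Type} [CommRing R] [IsNoetherianRing R] (P Q : Ideal R) [P.IsPrime] [Q.IsPrime]
    (hPQ : P ≤ Q) (h : ∀ u ∈ Q, ∃ w, w ∉ Q ∧ w * u ∈ P ⊔ Q ^ 2) : Q ≤ P := by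
  let AQ := Localization.AtPrime Q
  have h1 : Ideal.map (algebraMap R AQ) Q ≤ Ideal.map (algebraMap R AQ) P := by
    apply Submodule.le_of_le_smul_of_le_jacobson_bot (I := IsLocalRing.maximalIdeal AQ)
      (IsNoetherian.noetherian _) (IsLocalRing.maximalIdeal_le_jacobson _)
    rw [← Localization.AtPrime.map_eq_maximalIdeal, smul_eq_mul, ← sq, ← Ideal.map_pow,
      ← Ideal.map_sup, Ideal.map_le_iff_le_comap]
    intro u hu
    obtain ⟨w, hw, hwu⟩ := h u hu
    rw [Ideal.mem_comap, IsLocalization.algebraMap_mem_map_algebraMap_iff Q.primeCompl]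
    exact ⟨w, hw, hwu⟩
  intro u hu
  have h2 := h1 (Ideal.mem_map_of_mem _ hu)
  rw [IsLocalization.algebraMap_mem_map_algebraMap_iff Q.primeCompl] at h2
  obtain ⟨w, hw, hwu⟩ := h2
  exact ((Ideal.IsPrime.mem_or_mem ‹_› hwu).resolve_left fun h => hw (hPQ h))

section core
variable {R : Type} [CommRing R] [Algebra ℂ R] (δ : Derivation ℂ R R) (p : Ideal R)

theorem it_mul_mem (k : ℕ) : ∀ r a : R, (∀ j, δ^[j] a ∈ p) → δ^[k] (r * a) ∈ p := by
  induction k with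
  | zero => intro r a h; exact p.mul_mem_left _ (h 0)
  | succ k ih =>
    intro r a h
    rw [Function.iterate_succ_apply, Derivation.leibniz, iterate_map_add]
    refine p.add_mem (ih _ _ fun j => ?_) ?_
    · exact h (j + 1)
    · rw [smul_eq_mul, mul_comm]; exact ih _ _ h

def dcore : Ideal R where
  carrier := {a | ∀ j, δ^[j] a ∈ p}
  zero_mem' := fun j => by rw [iterate_map_zero]; exact p.zero_mem
  add_mem' := fun {a b} ha hb j => by rw [iterate_map_add]; exact p.add_mem (ha j) (hb j)
  smul_mem' := fun r a h j => it_mul_mem δ p j r a h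

theorem it_mul_low (n : ℕ) : ∀ k l : ℕ, ∀ a b : R, n < k + l → (∀ j < k, δ^[j] a ∈ p) →
    (∀ j < l, δ^[j] b ∈ p) → δ^[n] (a * b) ∈ p := by
  induction n with
  | zero =>
    intro k l a b h ha hb
    rcases Nat.eq_zero_or_pos k with hk | hk
    · exact p.mul_mem_left _ (hb 0 (by omega))
    · exact p.mul_mem_right _ (ha 0 hk)
  | succ n ih =>
    intro k l a b h ha hb
    rw [Function.iterate_succ_apply, Derivation.leibniz, iterate_map_add]
    refine p.add_mem ?_ ?_
    · exact ih k (l - 1) _ _ (by omega) ha (fun j hj => hb (j + 1) (by omega))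
    · rw [smul_eq_mul, mul_comm]
      exact ih (k - 1) l _ _ (by omega) (fun j hj => ha (j + 1) (by omega)) hb

theorem it_mul_top (n : ℕ) : ∀ k l : ℕ, ∀ a b : R, n = k + l → (∀ j < k, δ^[j] a ∈ p) →
    (∀ j < l, δ^[j] b ∈ p) → δ^[n] (a * b) - (n.choose k : R) * (δ^[k] a * δ^[l] b) ∈ p := by
  induction n with
  | zero =>
    intro k l a b h ha hb
    obtain rfl : k = 0 := by omega
    obtain rfl : l = 0 := by omega
    simp
  | succ n ih =>
    intro k l a b h ha hb
    rw [Function.iterate_succ_apply, Derivation.leibniz, iterate_map_add, smul_eq_mul, smul_eq_mul,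
      mul_comm b]
    have A1 : ∀ k', k = k' + 1 → δ^[n] (δ a * b) - (n.choose k' : R) * (δ^[k] a * δ^[l] b) ∈ p := by
      rintro k' rfl
      exact ih k' l (δ a) b (by omega) (fun j hj => ha (j + 1) (by omega)) hb
    have A2 : ∀ l', l = l' + 1 → δ^[n] (a * δ b) - (n.choose k : R) * (δ^[k] a * δ^[l] b) ∈ p := by
      rintro l' rfl
      exact ih k l' a (δ b) (by omega) ha (fun j hj => hb (j + 1) (by omega))
    rcases k with _ | k
    · have h1 := A2 n (by omega)
      have h2 : δ^[n] (δ a * b) ∈ p := it_mul_low δ p n 0 l _ _ (by omega) (by simp) hb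
      have := p.add_mem h1 h2
      simp only [Nat.choose_zero_right] at this ⊢
      convert this using 1
      ring
    · have h1 := A1 k rfl
      rcases l with _ | l
      · have h2 : δ^[n] (a * δ b) ∈ p := it_mul_low δ p n (k + 1) 0 _ _ (by omega) ha (by simp)
        obtain rfl : n = k := by omega
        have := p.add_mem h1 h2
        simp only [Nat.choose_self] at this ⊢
        convert this using 1
        ring
      · have := p.add_mem h1 (A2 l rfl)
        rw [Nat.choose_succ_succ]
        convert this using 1
        push_cast
        ring

theorem dcore_prime [hp : p.IsPrime] : (dcore δ p).IsPrime := by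
  classical
  refine ⟨fun h => hp.ne_top (Ideal.eq_top_iff_one _ |>.2 ?_), ?_⟩
  · have : (1 : R) ∈ dcore δ p := h ▸ Submodule.mem_top
    exact this 0
  · intro a b hab
    by_contra! hc
    obtain ⟨ha, hb⟩ := hc
    have ha' : ∃ j, δ^[j] a ∉ p := by
      by_contra! h; exact ha h
    have hb' : ∃ j, δ^[j] b ∉ p := by
      by_contra! h; exact hb h
    have h1 := it_mul_top δ p _ (Nat.find ha') (Nat.find hb') a b rfl
      (fun j hj => not_not.1 (Nat.find_min ha' hj)) (fun j hj => not_not.1 (Nat.find_min hb' hj))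
    have h2 := hab (Nat.find ha' + Nat.find hb')
    rw [p.sub_mem_iff_right h2] at h1
    rcases hp.mem_or_mem h1 with h | h
    · have hne : (((Nat.find ha' + Nat.find hb').choose (Nat.find ha') : ℕ) : ℂ) ≠ 0 := by
        exact_mod_cast (Nat.choose_pos (by omega)).ne'
      refine hp.ne_top (Ideal.eq_top_of_isUnit_mem _ h ?_)
      have := (IsUnit.mk0 _ hne).map (algebraMap ℂ R)
      rwa [map_natCast] at this
    · rcases hp.mem_or_mem h with h | h
      · exact Nat.find_spec ha' h
      · exact Nat.find_spec hb' h

theorem minimalPrime_stable (J : Ideal R) (hJ : ∀ u ∈ J, δ u ∈ J) (hp : p ∈ J.minimalPrimes) :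
    ∀ u ∈ p, δ u ∈ p := by
  have : p.IsPrime := hp.1.1
  have hle : p ≤ dcore δ p := by
    refine hp.2 ⟨dcore_prime δ p, ?_⟩ ?_
    · intro a ha j
      apply hp.1.2
      induction j with
      | zero => exact ha
      | succ j ih => rw [Function.iterate_succ_apply']; exact hJ _ ih
    · intro a ha; exact ha 0
  intro u hu
  exact hle hu 1
end core

end helpers

section gdet
variable {R : Type} [CommRing R] {m : ℕ}

/-- Determinant with two distinguished rows. -/
def gdet (v w : Fin (m + 2) → R) (W : Fin m → Fin (m + 2) → R) : R :=
  Matrix.det (Matrix.of (Fin.cons v (Fin.cons w W) : Fin (m + 2) → Fin (m + 2) → R))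

theorem gdet_swap (a b : Fin (m + 2) → R) (W : Fin m → Fin (m + 2) → R) :
    gdet b a W = - gdet a b W := by
  unfold gdet
  have h := Matrix.det_permute (Equiv.swap (0 : Fin (m + 2)) 1)
    (Matrix.of (Fin.cons a (Fin.cons b W) : Fin (m + 2) → Fin (m + 2) → R))
  rw [Equiv.Perm.sign_swap (by simp)] at h
  have h2 : (Matrix.of (Fin.cons a (Fin.cons b W) : Fin (m + 2) → Fin (m + 2) → R)).submatrix
      (Equiv.swap (0 : Fin (m + 2)) 1) id =
      Matrix.of (Fin.cons b (Fin.cons a W) : Fin (m + 2) → Fin (m + 2) → R) := by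
    ext i j
    simp only [Matrix.submatrix_apply, Matrix.of_apply, id]
    refine Fin.cases ?_ (fun i => Fin.cases ?_ (fun i => ?_) i) i
    · rw [Equiv.swap_apply_left]; rfl
    · have : (Fin.succ 0 : Fin (m + 2)) = 1 := rfl
      rw [this, Equiv.swap_apply_right]; rfl
    · rw [Equiv.swap_apply_of_ne_of_ne (Fin.succ_ne_zero _)]
      · rfl
      · intro h
        exact Fin.succ_ne_zero i (Fin.succ_injective _ h)
  rw [h2] at h
  rw [h]; simp

theorem gdet_cramer (a b u : Fin (m + 2) → R) (W : Fin m → Fin (m + 2) → R) :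
    ∃ c : Fin m → R, ∀ j,
    gdet a b W * u j = gdet u b W * a j + gdet a u W * b j + ∑ k, c k * W k j := by
  obtain ⟨M, hM⟩ : ∃ M : Matrix (Fin (m + 2)) (Fin (m + 2)) R,
    M = Matrix.of (Fin.cons a (Fin.cons b W) : Fin (m + 2) → Fin (m + 2) → R) := ⟨_, rfl⟩
  have m0 : ∀ j, M 0 j = a j := fun j => by rw [hM]; rfl
  have m1 : ∀ j, M (Fin.succ 0) j = b j := fun j => by rw [hM]; rfl
  have m2 : ∀ k j, M (Fin.succ (Fin.succ k)) j = W k j := fun k j => by rw [hM]; rfl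
  refine ⟨fun k => M.transpose.cramer u k.succ.succ, fun j => ?_⟩
  have h := congrFun (Matrix.mulVec_cramer M.transpose u) j
  rw [Matrix.det_transpose] at h
  have e0 : M.transpose.cramer u 0 = gdet u b W := by
    rw [Matrix.cramer_transpose_apply]
    unfold gdet
    congr 1
    ext i l
    refine Fin.cases ?_ (fun i => Fin.cases ?_ (fun i => ?_) i) i
    · rw [Matrix.updateRow_self]; rfl
    · rw [Matrix.updateRow_ne (Fin.succ_ne_zero _), m1]; rfl
    · rw [Matrix.updateRow_ne (Fin.succ_ne_zero _), m2]; rfl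
  have e1 : M.transpose.cramer u (Fin.succ 0) = gdet a u W := by
    rw [Matrix.cramer_transpose_apply]
    unfold gdet
    congr 1
    ext i l
    refine Fin.cases ?_ (fun i => Fin.cases ?_ (fun i => ?_) i) i
    · rw [Matrix.updateRow_ne (Fin.succ_ne_zero _).symm, m0]; rfl
    · rw [Matrix.updateRow_self]; rfl
    · rw [Matrix.updateRow_ne (fun h => Fin.succ_ne_zero _ (Fin.succ_injective _ h)), m2]; rfl
  have h' : M.det * u j = ∑ i, M i j * M.transpose.cramer u i := h.symm
  have hd : gdet a b W = M.det := by rw [hM]; rfl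
  rw [hd, h', Fin.sum_univ_succ, Fin.sum_univ_succ, e0, e1, ← add_assoc, m0, m1]
  congr 1
  · rw [mul_comm (a j), mul_comm (b j)]
  · refine Finset.sum_congr rfl fun k _ => ?_
    rw [m2, mul_comm]

end gdet

section poisson
variable {m : ℕ} (s t : Fin m → PA m)

/-- The gradient. -/
def grad (f : PA m) : Fin (m + 2) → PA m := fun j => pderiv j f

/-- The rows coming from the fixed rational functions. -/
def wrow (k : Fin m) : Fin (m + 2) → PA m :=
  fun j => t k * pderiv j (s k) - s k * pderiv j (t k)

/-- The bracket with arbitrary first row. -/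
def brV (v w : Fin (m + 2) → PA m) : PA m :=
  Matrix.det (Matrix.of (Fin.cons v (Fin.cons w (wrow s t)) : Fin (m + 2) → Fin (m + 2) → PA m))

theorem pbr_eq_brV (f g : PA m) : pbr s t f g = brV s t (grad f) (grad g) := rfl

/-- Cofactors along the first row. -/
def cof (g : PA m) (j : Fin (m + 2)) : PA m :=
  (-1) ^ (j : ℕ) * Matrix.det (Matrix.of (fun (i : Fin (m + 1)) (l : Fin (m + 1)) =>
    (Fin.cons (grad g) (wrow s t) : Fin (m + 1) → Fin (m + 2) → PA m) i (j.succAbove l)))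

theorem brV_eq (v : Fin (m + 2) → PA m) (g : PA m) :
    brV s t v (grad g) = ∑ j, cof s t g j * v j := by
  unfold brV
  rw [Matrix.det_succ_row_zero]
  refine Finset.sum_congr rfl fun j _ => ?_
  unfold cof
  have : (Matrix.of (Fin.cons v (Fin.cons (grad g) (wrow s t)) :
      Fin (m + 2) → Fin (m + 2) → PA m)).submatrix Fin.succ j.succAbove =
      Matrix.of (fun (i : Fin (m + 1)) (l : Fin (m + 1)) =>
        (Fin.cons (grad g) (wrow s t) : Fin (m + 1) → Fin (m + 2) → PA m) i (j.succAbove l)) := by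
    ext i l
    simp [Matrix.submatrix_apply]
  rw [this]
  simp only [Matrix.of_apply, Fin.cons_zero]
  ring

/-- The Hamiltonian derivation. -/
def ham (g : PA m) : Derivation ℂ (PA m) (PA m) := ∑ j, cof s t g j • pderiv j

theorem ham_apply (f g : PA m) : ham s t g f = pbr s t f g := by
  rw [pbr_eq_brV, brV_eq]
  have : ∀ S : Finset (Fin (m + 2)), (∑ j ∈ S, cof s t g j • pderiv j : Derivation ℂ (PA m) (PA m)) f =
      ∑ j ∈ S, cof s t g j * pderiv j f := by
    intro S
    induction S using Finset.induction_on with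
    | empty => simp
    | insert a S ha ih => rw [Finset.sum_insert ha, Finset.sum_insert ha, Derivation.add_apply, ih,
        Derivation.smul_apply, smul_eq_mul]
  exact this Finset.univ

theorem pbr_mul (a b r : PA m) : pbr s t (a * b) r = a * pbr s t b r + b * pbr s t a r := by
  simp only [← ham_apply, Derivation.leibniz, smul_eq_mul]

theorem pbr_add (a b r : PA m) : pbr s t (a + b) r = pbr s t a r + pbr s t b r := by
  simp only [← ham_apply, map_add]

theorem pbr_sub (a b r : PA m) : pbr s t (a - b) r = pbr s t a r - pbr s t b r := by
  simp only [← ham_apply, map_sub]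

theorem pbr_C (α : ℂ) (r : PA m) : pbr s t (C α) r = 0 := by
  rw [← ham_apply]; exact (ham s t r).map_algebraMap α

theorem pbr_swap (a b : PA m) : pbr s t b a = - pbr s t a b :=
  gdet_swap (grad a) (grad b) (wrow s t)

theorem pbr_casimir (k : Fin m) (r : PA m) :
    t k * pbr s t (s k) r - s k * pbr s t (t k) r = 0 := by
  have h : brV s t (wrow s t k) (grad r) = 0 := by
    unfold brV
    refine Matrix.det_zero_of_row_eq (i := 0) (j := k.succ.succ) (Fin.succ_ne_zero _).symm ?_
    funext j
    simp [Matrix.of_apply]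
  rw [brV_eq] at h
  rw [← h, pbr_eq_brV, pbr_eq_brV, brV_eq, brV_eq, Finset.mul_sum, Finset.mul_sum,
    ← Finset.sum_sub_distrib]
  refine Finset.sum_congr rfl fun j _ => ?_
  simp only [grad, wrow]
  ring

theorem cramer_id (a b u : PA m) : ∃ c : Fin m → PA m, ∀ j,
    pbr s t a b * pderiv j u = pbr s t u b * pderiv j a + pbr s t a u * pderiv j b +
      ∑ k, c k * wrow s t k j :=
  gdet_cramer (grad a) (grad b) (grad u) (wrow s t)

/-- Poisson ideals. -/
def IsPois (I : Ideal (PA m)) : Prop := ∀ u ∈ I, ∀ r : PA m, pbr s t u r ∈ I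

/-- Rationality. -/
def IsRat (P : Ideal (PA m)) : Prop := ∀ c d : PA m, d ∉ P →
  (∀ r : PA m, d * pbr s t c r - c * pbr s t d r ∈ P) → ∃ α : ℂ, c - C α * d ∈ P

/-- Poisson primitivity. -/
def IsPrimv (P : Ideal (PA m)) : Prop := ∃ M : Ideal (PA m), M.IsMaximal ∧ P ≤ M ∧
  ∀ J : Ideal (PA m), IsPois s t J → J ≤ M → J ≤ P

theorem lc_to_prim (P : Ideal (PA m)) (hP : P.IsPrime) (hPp : IsPois s t P)
    (h : P < sInf {Q : Ideal (PA m) | Q.IsPrime ∧ IsPois s t Q ∧ P < Q}) : IsPrimv s t P := by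
  obtain ⟨f, hf, hfP⟩ := SetLike.exists_of_lt h
  have hjac : P.jacobson = P := (isJacobsonRing_iff_prime_eq.1 inferInstance) P hP
  obtain ⟨M, ⟨hPM, hM⟩, hfM⟩ : ∃ M : Ideal (PA m), (P ≤ M ∧ M.IsMaximal) ∧ f ∉ M := by
    by_contra! hc
    apply hfP
    rw [← hjac]
    exact Ideal.mem_sInf.2 fun {M} hM => hc M hM
  refine ⟨M, hM, hPM, fun J hJ hJM => ?_⟩
  have : M.IsPrime := hM.isPrime
  have hK : IsPois s t (J ⊔ P) := by
    intro u hu r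
    obtain ⟨a, ha, b, hb, rfl⟩ := Submodule.mem_sup.1 hu
    rw [pbr_add]
    exact add_mem (Ideal.mem_sup_left (hJ a ha r)) (Ideal.mem_sup_right (hPp b hb r))
  obtain ⟨q, hq, hqM⟩ := Ideal.exists_minimalPrimes_le (sup_le hJM hPM)
  have hqP : IsPois s t q := by
    intro u hu r
    rw [← ham_apply]
    exact minimalPrime_stable (ham s t r) q (J ⊔ P)
      (fun v hv => by rw [ham_apply]; exact hK v hv r) hq u hu
  have hPq : P ≤ q := le_sup_right.trans hq.1.2
  have hJq : J ≤ q := le_sup_left.trans hq.1.2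
  rcases hPq.lt_or_eq with hlt | heq
  · exact absurd (hqM (Ideal.mem_sInf.1 hf ⟨hq.1.1, hqP, hlt⟩)) hfM
  · rw [heq]; exact hJq

/-- `{a | a d ∈ c A + P}`. -/
def frI (P : Ideal (PA m)) (c d : PA m) : Ideal (PA m) where
  carrier := {a | ∃ y, a * d - c * y ∈ P}
  zero_mem' := ⟨0, by simp⟩
  add_mem' := by
    rintro a b ⟨y, hy⟩ ⟨z, hz⟩
    refine ⟨y + z, ?_⟩
    convert P.add_mem hy hz using 1
    ring
  smul_mem' := by
    rintro r a ⟨y, hy⟩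
    refine ⟨r * y, ?_⟩
    convert P.mul_mem_left r hy using 1
    simp only [smul_eq_mul]
    ring

theorem frI_pois (P : Ideal (PA m)) (hP : P.IsPrime) (hPp : IsPois s t P) (c d : PA m)
    (hd : d ∉ P) (h : ∀ r : PA m, d * pbr s t c r - c * pbr s t d r ∈ P) :
    IsPois s t (frI P c d) := by
  rintro a ⟨y, hy⟩ r
  refine ⟨pbr s t y r, ?_⟩
  have h1 := hPp _ hy r
  rw [pbr_sub, pbr_mul, pbr_mul] at h1
  have h2 := h r
  refine (hP.mem_or_mem (x := d) ?_).resolve_left hd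
  have := P.add_mem (P.sub_mem (P.mul_mem_left d h1) (P.mul_mem_left (pbr s t d r) hy))
    (P.mul_mem_left y h2)
  convert this using 1
  ring

theorem prim_to_rat (P : Ideal (PA m)) (hP : P.IsPrime) (hPp : IsPois s t P)
    (h : IsPrimv s t P) : IsRat s t P := by
  obtain ⟨M, hM, hPM, hprim⟩ := h
  intro c d hd hc
  have hMp : M.IsPrime := hM.isPrime
  -- denominators
  have hK : ∃ r, r ∉ M ∧ ∃ e, r * c - d * e ∈ P := by
    by_contra! hcon
    by_cases hcP : c ∈ P
    · exact hcon 1 (fun h => hMp.ne_top (M.eq_top_iff_one.2 h)) 0 (by simpa using hcP)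
    have := hprim (frI P d c) (frI_pois s t P hP hPp d c hcP fun r => by
      have := P.neg_mem (hc r)
      convert this using 1
      ring) (fun r hr => by
        by_contra hrM
        obtain ⟨e, he⟩ := hr
        exact hcon r hrM e he)
    exact hd (this ⟨c, by simp⟩)
  obtain ⟨r, hrM, e, he⟩ := hK
  obtain ⟨x, hx⟩ := isMaximal_iff_eq_vanishingIdeal_singleton.1 hM
  have hmem : ∀ f : PA m, f ∈ M ↔ eval x f = 0 := by
    intro f; rw [hx]; simp [mem_vanishingIdeal_singleton_iff, aeval_eq_eval]
  have hr0 : eval x r ≠ 0 := fun h => hrM ((hmem r).2 h)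
  set α := eval x e / eval x r with hα
  have heM : e - C α * r ∈ M := by
    rw [hmem]; simp [hα, div_mul_cancel₀ _ hr0]
  have hrP : r ∉ P := fun h => hrM (hPM h)
  have hle := hprim (frI P (c - C α * d) d) (frI_pois s t P hP hPp _ d hd fun q => by
      rw [pbr_sub, pbr_mul, pbr_C]
      convert hc q using 1
      ring) (by
    rintro a ⟨y, hy⟩
    have h1 : d * (r * a - (e - C α * r) * y) ∈ P := by
      have := P.add_mem (P.mul_mem_left r hy) (P.mul_mem_left y he)
      convert this using 1
      ring
    have h2 := hPM ((hP.mem_or_mem h1).resolve_left hd)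
    rw [M.sub_mem_iff_left (M.mul_mem_right _ heM)] at h2
    exact (hMp.mem_or_mem h2).resolve_left hrM)
  exact ⟨α, hle ⟨d, by ring_nf; exact P.zero_mem⟩⟩

theorem row_form (P : Ideal (PA m)) (hrat : IsRat s t P) (k : Fin m) :
    ∃ e h : PA m, h ∈ P ∧ ∀ j, wrow s t k j - e * pderiv j h ∈ P := by
  by_cases htk : t k ∈ P
  · refine ⟨- s k, t k, htk, fun j => ?_⟩
    have := P.mul_mem_right (pderiv j (s k)) htk
    convert this using 1
    simp only [wrow]; ring
  · obtain ⟨α, hα⟩ := hrat (s k) (t k) htk (fun r => by rw [pbr_casimir]; exact P.zero_mem)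
    refine ⟨t k, s k - C α * t k, hα, fun j => ?_⟩
    have := P.neg_mem (P.mul_mem_right (pderiv j (t k)) hα)
    convert this using 1
    simp only [wrow, map_sub, Derivation.leibniz, pderiv_C, smul_eq_mul]; ring

theorem rat_key (P : Ideal (PA m)) (hP : P.IsPrime) (hrat : IsRat s t P)
    (Q : Ideal (PA m)) (hQ : Q.IsPrime) (hQp : IsPois s t Q) (hPQ : P ≤ Q) (a b : PA m)
    (hab : pbr s t a b ∉ Q) : Q ≤ P := by
  choose e h hh hrow using row_form s t P hrat
  refine nak P Q hPQ fun u hu => ?_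
  obtain ⟨c, hc⟩ := cramer_id s t a b u
  have hSP : ∑ k, c k * e k * h k ∈ P := sum_mem fun k _ => P.mul_mem_left _ (hh k)
  obtain ⟨w, hw, hw2⟩ := symb Q (pbr s t a b * u - ∑ k, c k * e k * h k)
    (Q.sub_mem (Q.mul_mem_left _ hu) (hPQ hSP)) (by
      intro j
      have h1 : pbr s t u b * pderiv j a ∈ Q := Q.mul_mem_right _ (hQp u hu b)
      have h2 : pbr s t a u * pderiv j b ∈ Q := by
        rw [pbr_swap s t u a]; exact Q.mul_mem_right _ (Q.neg_mem (hQp u hu a))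
      have h3 : ∑ k, c k * (wrow s t k j - e k * pderiv j (h k)) ∈ Q :=
        sum_mem fun k _ => Q.mul_mem_left _ (hPQ (hrow k j))
      have h4 : ∑ k, h k * pderiv j (c k * e k) ∈ Q :=
        sum_mem fun k _ => Q.mul_mem_right _ (hPQ (hh k))
      have h5 : u * pderiv j (pbr s t a b) ∈ Q := Q.mul_mem_right _ hu
      have key : pderiv j (pbr s t a b * u - ∑ k, c k * e k * h k) =
          pbr s t u b * pderiv j a + pbr s t a u * pderiv j b +
          ∑ k, c k * (wrow s t k j - e k * pderiv j (h k)) -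
          ∑ k, h k * pderiv j (c k * e k) + u * pderiv j (pbr s t a b) := by
        rw [map_sub, Derivation.leibniz, smul_eq_mul, smul_eq_mul, hc j, map_sum]
        have e1 : ∑ k, pderiv j (c k * e k * h k) =
            ∑ k, c k * e k * pderiv j (h k) + ∑ k, h k * pderiv j (c k * e k) := by
          rw [← Finset.sum_add_distrib]
          refine Finset.sum_congr rfl fun k _ => ?_
          rw [Derivation.leibniz, smul_eq_mul, smul_eq_mul]
        have e2 : ∑ k, c k * (wrow s t k j - e k * pderiv j (h k)) =
            ∑ k, c k * wrow s t k j - ∑ k, c k * e k * pderiv j (h k) := by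
          rw [← Finset.sum_sub_distrib]
          refine Finset.sum_congr rfl fun k _ => ?_
          ring
        rw [e1, e2]
        ring
      rw [key]
      exact Q.add_mem (Q.sub_mem (Q.add_mem (Q.add_mem h1 h2) h3) h4) h5)
  refine ⟨w * pbr s t a b, fun hmem => (hQ.mem_or_mem hmem).elim hw hab, ?_⟩
  have := add_mem (Ideal.mem_sup_right hw2 : _ ∈ P ⊔ Q ^ 2)
    (Ideal.mem_sup_left (P.mul_mem_left w hSP) : _ ∈ P ⊔ Q ^ 2)
  convert this using 1
  ring

theorem rat_to_lc (P : Ideal (PA m)) (hP : P.IsPrime) (hrat : IsRat s t P) :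
    P < sInf {Q : Ideal (PA m) | Q.IsPrime ∧ IsPois s t Q ∧ P < Q} := by
  refine lt_of_le_of_ne (le_sInf fun Q hQ => hQ.2.2.le) fun heq => ?_
  by_cases htriv : ∀ a b, pbr s t a b ∈ P
  · have hno : ∀ Q : Ideal (PA m), Q.IsPrime → P < Q → False := by
      intro Q hQ hPQ
      obtain ⟨c, hcQ, hcP⟩ := SetLike.exists_of_lt hPQ
      obtain ⟨α, hα⟩ := hrat c 1 (fun h => hP.ne_top (P.eq_top_iff_one.2 h)) (fun r =>
        P.sub_mem (P.mul_mem_left _ (htriv _ _)) (P.mul_mem_left _ (htriv _ _)))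
      rw [mul_one] at hα
      have h0 : α ≠ 0 := by
        rintro rfl
        apply hcP
        simpa using hα
      have h1 : (C α : PA m) ∈ Q := (Q.sub_mem_iff_right hcQ).1 (hPQ.le hα)
      exact hQ.ne_top (Ideal.eq_top_of_isUnit_mem _ h1 ((IsUnit.mk0 _ h0).map C))
    apply hP.ne_top
    rw [heq, sInf_eq_top]
    intro Q hQ
    exact (hno Q hQ.1 hQ.2.2).elim
  · push Not at htriv
    obtain ⟨a, b, hab⟩ := htriv
    apply hab
    rw [heq]
    refine Ideal.mem_sInf.2 fun {Q} hQ => ?_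
    by_contra hc
    exact absurd (rat_key s t P hP hrat Q hQ.1 hQ.2.1 hQ.2.2.le a b hc) hQ.2.2.not_ge

end poisson

theorem statement_18 {m : ℕ} (hm : 1 ≤ m)
    (s t : Fin m → PA m)
    (ht : ∀ i, t i ≠ 0)
    (hcop : ∀ i, ∀ d : PA m, d ∣ s i → d ∣ t i → IsUnit d)
    (hind : AlgebraicIndependent ℂ
      (fun i => algebraMap (PA m) (FB m) (s i) / algebraMap (PA m) (FB m) (t i)))
    (P : Ideal (PA m)) (hPprime : P.IsPrime)
    (hPpoisson : ∀ u ∈ P, ∀ r : PA m, pbr s t u r ∈ P) :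
    -- (i) locally closed ↔ (ii) Poisson primitive
    ((P < sInf {Q : Ideal (PA m) |
        Q.IsPrime ∧ (∀ u ∈ Q, ∀ r : PA m, pbr s t u r ∈ Q) ∧ P < Q}) ↔
     (∃ M : Ideal (PA m), M.IsMaximal ∧ P ≤ M ∧
        ∀ J : Ideal (PA m), (∀ u ∈ J, ∀ r : PA m, pbr s t u r ∈ J) → J ≤ M → J ≤ P)) ∧
    -- (ii) Poisson primitive ↔ (iii) rational
    ((∃ M : Ideal (PA m), M.IsMaximal ∧ P ≤ M ∧
        ∀ J : Ideal (PA m), (∀ u ∈ J, ∀ r : PA m, pbr s t u r ∈ J) → J ≤ M → J ≤ P) ↔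
     (∀ c d : PA m, d ∉ P →
        (∀ r : PA m, d * pbr s t c r - c * pbr s t d r ∈ P) →
        ∃ α : ℂ, c - C α * d ∈ P)) := by
  have h1 := lc_to_prim s t P hPprime hPpoisson
  have h2 := prim_to_rat s t P hPprime hPpoisson
  have h3 := rat_to_lc s t P hPprime
  exact ⟨⟨h1, fun h => h3 (h2 h)⟩, ⟨h2, fun h => h1 (h3 h)⟩⟩

end
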